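/- Assume E₀, U, L, K satisfy the hypothesis and let A be the operator with domain D(A) = {(u,w) ∈ E₀ × H : K^⋄Ku − L^⋄w ∈ E}. Define h := {(x,y) ∈ BD(G) ⊕ BD(G) : π*_{BD(G)}x ∈ E₀ and K^⋄Kπ*_{BD(G)}x − L^⋄π*_{BD(D)}Ġy ∈ E}. Then (u,w) ∈ D(A) if and only if (u,w) ∈ D(G) × D(D) and (π_{BD(G)}u, Ḋπ_{BD(D)}w) ∈ h. -/

import Mathlib

open scoped ComplexInnerProductSpace
open Filter Topology Classical

noncomputable section

variable {E H : Type*}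
  [NormedAddCommGroup E] [InnerProductSpace ℂ E] [CompleteSpace E]
  [NormedAddCommGroup H] [InnerProductSpace ℂ H] [CompleteSpace H]

/-- The operator `G := (−D₀)*`. -/
def Gop (D₀ : H →ₗ.[ℂ] E) : E →ₗ.[ℂ] H := (-D₀).adjoint

/-- The operator `D := −(G₀)*`. -/
def Dop (G₀ : E →ₗ.[ℂ] H) : H →ₗ.[ℂ] E := -(G₀.adjoint)

/-- Pointwise application of `G`, defined to be `0` off the domain. -/
def Gap (D₀ : H →ₗ.[ℂ] E) (u : E) : H :=
  if h : u ∈ (Gop D₀).domain then Gop D₀ ⟨u, h⟩ else 0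

/-- Pointwise application of `D`, defined to be `0` off the domain. -/
def Dap (G₀ : E →ₗ.[ℂ] H) (w : H) : E :=
  if h : w ∈ (Dop G₀).domain then Dop G₀ ⟨w, h⟩ else 0

/-- The graph inner product of `D_G`: `⟪x,y⟫_E + ⟪Gx,Gy⟫_H`. -/
def innG (D₀ : H →ₗ.[ℂ] E) (x y : E) : ℂ := ⟪x, y⟫ + ⟪Gap D₀ x, Gap D₀ y⟫

/-- The graph inner product of `D_D`: `⟪x,y⟫_H + ⟪Dx,Dy⟫_E`. -/
def innD (G₀ : E →ₗ.[ℂ] H) (x y : H) : ℂ := ⟪x, y⟫ + ⟪Dap G₀ x, Dap G₀ y⟫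

/-- The boundary data space `BD(G)`, the orthogonal complement of `D(G₀)` in `D_G`. -/
def BDG (G₀ : E →ₗ.[ℂ] H) (D₀ : H →ₗ.[ℂ] E) : Set E :=
  {u | u ∈ (Gop D₀).domain ∧ ∀ v ∈ G₀.domain, innG D₀ u v = 0}

/-- The boundary data space `BD(D)`, the orthogonal complement of `D(D₀)` in `D_D`. -/
def BDD (G₀ : E →ₗ.[ℂ] H) (D₀ : H →ₗ.[ℂ] E) : Set H :=
  {w | w ∈ (Dop G₀).domain ∧ ∀ v ∈ D₀.domain, innD G₀ w v = 0}

variable {U E₀ : Type*}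
  [NormedAddCommGroup U] [InnerProductSpace ℂ U] [CompleteSpace U]
  [NormedAddCommGroup E₀] [InnerProductSpace ℂ E₀] [CompleteSpace E₀]

/-- Closedness of the operator `(L,K) : E₀ ⊆ E → H ⊕ U`: whenever `wₙ` in `E₀` with `wₙ → w`
in `E`, `Lwₙ → v` in `H` and `Kwₙ → z` in `U`, then `w ∈ E₀`, `Lw = v` and `Kw = z`. -/
def ClosedLK (j : E₀ →L[ℂ] E) (L : E₀ →L[ℂ] H) (K : E₀ →L[ℂ] U) : Prop :=
  ∀ (f : ℕ → E₀) (w : E) (v : H) (z : U),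
    Tendsto (fun n => j (f n)) atTop (nhds w) →
    Tendsto (fun n => L (f n)) atTop (nhds v) →
    Tendsto (fun n => K (f n)) atTop (nhds z) →
    ∃ w₀ : E₀, j w₀ = w ∧ L w₀ = v ∧ K w₀ = z

/-- The boundary relation `h` associated with `A`:
`h = {(x,y) ∈ BD(G) ⊕ BD(G) : π*x ∈ E₀, K^⋄Kπ*x − L^⋄π*Ġy ∈ E}`. -/
def hRel (G₀ : E →ₗ.[ℂ] H) (D₀ : H →ₗ.[ℂ] E) (j : E₀ →L[ℂ] E) (L : E₀ →L[ℂ] H)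
    (K : E₀ →L[ℂ] U) : Set (E × E) :=
  {p | p.1 ∈ BDG G₀ D₀ ∧ p.2 ∈ BDG G₀ D₀ ∧
    ∃ x₀ : E₀, j x₀ = p.1 ∧
      ∃ e : E, ∀ z : E₀, (⟪e, j z⟫ : ℂ) = ⟪K x₀, K z⟫ - ⟪Gap D₀ p.2, L z⟫}

/-!
The set `D(A)` is a linear subspace of `E × H`. It contains `D(G₀) × D(D₀)`: since `K` vanishes on
`D(G₀)`, the first component does not contribute to `K^⋄Ku − L^⋄w`, and `L ⊆ G = (−D₀)*` gives
`−L^⋄w = D₀w ∈ E` for `w ∈ D(D₀)`. Hence membership of `(u, w)` in `D(A)` depends only on the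
boundary parts of `u` and `w`, and `ĠḊ = 1` on `BD(D)` turns it into membership in `h`. That `w` has
a boundary part at all, i.e. `w ∈ D(D)`, follows by testing against `D(G₀)`, where `K` drops out.
Since `D = −(G₀)* = (−G₀)*`, the pairs `(G₀, G)` and `(D₀, D)` play symmetric roles.
-/

section Adjoint

open scoped LinearPMap

variable {𝕜 X Y : Type*} [RCLike 𝕜]
  [NormedAddCommGroup X] [InnerProductSpace 𝕜 X] [CompleteSpace X]
  [NormedAddCommGroup Y] [InnerProductSpace 𝕜 Y]

theorem linearPMap_adjoint_neg {T : X →ₗ.[𝕜] Y} (hT : Dense (T.domain : Set X)) : (-T)† = -T† := by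
  refine LinearPMap.ext ?_ fun y hy hy' => ?_
  · ext y
    exact (continuous_congr fun _ => inner_neg_right y _).trans continuous_neg_iff
  · refine LinearPMap.adjoint_apply_eq (T := -T) hT ⟨y, hy⟩ fun x => ?_
    have hadj : inner 𝕜 (T† ⟨y, hy'⟩) (x : X) = inner 𝕜 y (T x) :=
      LinearPMap.adjoint_isFormalAdjoint hT ⟨y, hy'⟩ x
    rw [LinearPMap.neg_apply, LinearPMap.neg_apply, inner_neg_left, inner_neg_right, hadj]

end Adjoint

section DomainA

variable {𝕜 X Y V M : Type*} [RCLike 𝕜]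
  [NormedAddCommGroup X] [InnerProductSpace 𝕜 X]
  [NormedAddCommGroup Y] [InnerProductSpace 𝕜 Y]
  [NormedAddCommGroup V] [InnerProductSpace 𝕜 V]
  [AddCommGroup M] [Module 𝕜 M]

/-- The domain `D(A)` of pairs `(u, w)` with `u ∈ E₀` and `K^⋄Ku − L^⋄w ∈ E`. The space `E₀` is
encoded as a module `M` mapped into `X` by `j`. -/
def domA (j : M →ₗ[𝕜] X) (L : M →ₗ[𝕜] Y) (K : M →ₗ[𝕜] V) : Submodule 𝕜 (X × Y) where
  carrier := {p | ∃ u₀ : M, j u₀ = p.1 ∧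
    ∃ e : X, ∀ x : M, inner 𝕜 e (j x) = inner 𝕜 (K u₀) (K x) - inner 𝕜 p.2 (L x)}
  zero_mem' := ⟨0, map_zero j, 0, by simp⟩
  add_mem' := by
    rintro p q ⟨u, hu, e, he⟩ ⟨v, hv, f, hf⟩
    refine ⟨u + v, by rw [map_add, hu, hv, Prod.fst_add], e + f, fun x => ?_⟩
    simp only [map_add, inner_add_left, he, hf, Prod.snd_add]
    ring
  smul_mem' := by
    rintro c p ⟨u, hu, e, he⟩
    refine ⟨c • u, by rw [map_smul, hu, Prod.smul_fst], c • e, fun x => ?_⟩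
    simp only [map_smul, inner_smul_left, he, Prod.smul_snd, mul_sub]

variable {j : M →ₗ[𝕜] X} {L : M →ₗ[𝕜] Y} {K : M →ₗ[𝕜] V}

theorem prod_domain_le_domA {S : Submodule 𝕜 X} {T : Y →ₗ.[𝕜] X}
    (hS : S ≤ (LinearMap.ker K).map j)
    (hT : ∀ (y : T.domain) (x : M), inner 𝕜 (y : Y) (L x) = -inner 𝕜 (T y) (j x)) :
    S.prod T.domain ≤ domA j L K := by
  rintro ⟨u, w⟩ ⟨hu, hw⟩
  obtain ⟨a, ha, hau⟩ := hS hu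
  refine ⟨a, hau, T ⟨w, hw⟩, fun x => ?_⟩
  rw [LinearMap.mem_ker.mp ha, inner_zero_left, hT ⟨w, hw⟩ x, zero_sub, neg_neg]

theorem snd_mem_adjoint_domain_of_mem_domA [CompleteSpace X] {T : X →ₗ.[𝕜] Y}
    (hker : T.domain ≤ (LinearMap.ker K).map j)
    (hL : ∀ (x : M) (hx : j x ∈ T.domain), L x = T ⟨j x, hx⟩) {p : X × Y}
    (hp : p ∈ domA j L K) : p.2 ∈ T.adjoint.domain := by
  obtain ⟨_, -, e, he⟩ := hp
  refine LinearPMap.mem_adjoint_domain_of_exists _ ⟨-e, ?_⟩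
  rintro ⟨v, hv⟩
  obtain ⟨x, hx, rfl⟩ := hker hv
  rw [inner_neg_left, he, LinearMap.mem_ker.mp hx, inner_zero_right, zero_sub, neg_neg, hL x hv]

end DomainA

section Gop

variable {G₀ : E →ₗ.[ℂ] H} {D₀ : H →ₗ.[ℂ] E}

omit [CompleteSpace E]

theorem mem_gop_domain_and_gap_eq_iff (hD₀ : Dense (D₀.domain : Set H)) {u : E} {g : H} :
    (u ∈ (Gop D₀).domain ∧ Gap D₀ u = g) ↔ ∀ y : D₀.domain, ⟪g, (y : H)⟫ = -⟪u, D₀ y⟫ := by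
  constructor
  · rintro ⟨hu, rfl⟩ y
    rw [Gap, dif_pos hu, ← inner_neg_right, ← LinearPMap.neg_apply]
    exact LinearPMap.adjoint_isFormalAdjoint (T := -D₀) hD₀ ⟨u, hu⟩ y
  · intro h
    have hg : ∀ y : (-D₀).domain, ⟪g, (y : H)⟫ = ⟪u, (-D₀) y⟫ := fun y => by
      rw [LinearPMap.neg_apply, inner_neg_right, h y]
    have hu : u ∈ (Gop D₀).domain := LinearPMap.mem_adjoint_domain_of_exists u ⟨g, hg⟩
    rw [Gap, dif_pos hu]
    exact ⟨hu, LinearPMap.adjoint_apply_eq (T := -D₀) hD₀ ⟨u, hu⟩ hg⟩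

theorem inner_gap_left (hD₀ : Dense (D₀.domain : Set H)) {u : E} (hu : u ∈ (Gop D₀).domain)
    (y : D₀.domain) : ⟪Gap D₀ u, (y : H)⟫ = -⟪u, D₀ y⟫ :=
  (mem_gop_domain_and_gap_eq_iff hD₀).mp ⟨hu, rfl⟩ y

theorem inner_gap_right (hD₀ : Dense (D₀.domain : Set H)) {u : E} (hu : u ∈ (Gop D₀).domain)
    (y : D₀.domain) : ⟪(y : H), Gap D₀ u⟫ = -⟪D₀ y, u⟫ := by
  rw [← inner_conj_symm, inner_gap_left hD₀ hu, map_neg, inner_conj_symm]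

theorem gap_coe (hsub : G₀ ≤ Gop D₀) (v : G₀.domain) : Gap D₀ (v : E) = G₀ v := by
  have hv := hsub.1 v.2
  rw [Gap, dif_pos hv]
  exact (hsub.2 (x := v) (y := ⟨v, hv⟩) rfl).symm

end Gop

section BoundaryData

variable {G₀ : E →ₗ.[ℂ] H} {D₀ : H →ₗ.[ℂ] E}

theorem le_gop_symm (hG₀ : Dense (G₀.domain : Set E)) (hD₀ : Dense (D₀.domain : Set H))
    (hsub : G₀ ≤ Gop D₀) : D₀ ≤ Gop G₀ := by
  refine LinearPMap.IsFormalAdjoint.le_adjoint (T := -G₀) hG₀ fun v y => ?_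
  rw [LinearPMap.neg_apply, inner_neg_left, ← gap_coe hsub, inner_gap_left hD₀ (hsub.1 v.2),
    neg_neg]

theorem gap_gap_of_mem_bdg (hG₀ : Dense (G₀.domain : Set E)) (hD₀ : Dense (D₀.domain : Set H))
    (hsub : G₀ ≤ Gop D₀) {w : H} (hw : w ∈ BDG D₀ G₀) :
    Gap G₀ w ∈ (Gop D₀).domain ∧ Gap D₀ (Gap G₀ w) = w := by
  refine (mem_gop_domain_and_gap_eq_iff hD₀).mpr fun y => eq_neg_of_add_eq_zero_left ?_
  rw [← gap_coe (le_gop_symm hG₀ hD₀ hsub) y]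
  exact hw.2 y y.2

theorem gap_mem_bdg (hG₀ : Dense (G₀.domain : Set E)) (hD₀ : Dense (D₀.domain : Set H))
    (hsub : G₀ ≤ Gop D₀) {w : H} (hw : w ∈ BDG D₀ G₀) : Gap G₀ w ∈ BDG G₀ D₀ := by
  obtain ⟨hdom, hgap⟩ := gap_gap_of_mem_bdg hG₀ hD₀ hsub hw
  refine ⟨hdom, fun v hv => ?_⟩
  rw [innG, hgap, gap_coe hsub ⟨v, hv⟩, inner_gap_left hG₀ hw.1 ⟨v, hv⟩, neg_add_cancel]

omit [CompleteSpace H] in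
theorem dop_eq_gop (hG₀ : Dense (G₀.domain : Set E)) : Dop G₀ = Gop G₀ :=
  (linearPMap_adjoint_neg hG₀).symm

omit [CompleteSpace H] in
theorem dap_eq_gap (hG₀ : Dense (G₀.domain : Set E)) : Dap G₀ = Gap G₀ := by
  unfold Dap Gap
  rw [dop_eq_gop hG₀]

omit [CompleteSpace H] in
theorem bdd_eq_bdg (hG₀ : Dense (G₀.domain : Set E)) : BDD G₀ D₀ = BDG D₀ G₀ := by
  simp only [BDD, BDG, innD, innG, dop_eq_gop hG₀, dap_eq_gap hG₀]

end BoundaryData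

section BoundaryRelation

variable {V M : Type*} [NormedAddCommGroup V] [InnerProductSpace ℂ V] [AddCommGroup M] [Module ℂ M]

/-- The boundary relation `h` of pairs `(x, y)` in `BD(G) ⊕ BD(G)` with `(x, Ġy) ∈ D(A)`, for `j`,
`L`, `K` defined on a space `M` without topology. -/
def boundaryRel (G₀ : E →ₗ.[ℂ] H) (D₀ : H →ₗ.[ℂ] E) (j : M →ₗ[ℂ] E) (L : M →ₗ[ℂ] H)
    (K : M →ₗ[ℂ] V) : Set (E × E) :=
  {p | p.1 ∈ BDG G₀ D₀ ∧ p.2 ∈ BDG G₀ D₀ ∧ (p.1, Gap D₀ p.2) ∈ domA j L K}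

variable {G₀ : E →ₗ.[ℂ] H} {D₀ : H →ₗ.[ℂ] E} {j : M →ₗ[ℂ] E} {L : M →ₗ[ℂ] H} {K : M →ₗ[ℂ] V}

theorem mk_gap_mem_boundaryRel_iff (hG₀ : Dense (G₀.domain : Set E))
    (hD₀ : Dense (D₀.domain : Set H)) (hsub : G₀ ≤ Gop D₀) {x : E} {w : H}
    (hx : x ∈ BDG G₀ D₀) (hw : w ∈ BDG D₀ G₀) :
    (x, Gap G₀ w) ∈ boundaryRel G₀ D₀ j L K ↔ (x, w) ∈ domA j L K := by
  have hGD : Gap D₀ (Gap G₀ w) = w := (gap_gap_of_mem_bdg hG₀ hD₀ hsub hw).2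
  refine ⟨fun ⟨_, _, h⟩ => hGD ▸ h, fun h => ⟨hx, gap_mem_bdg hG₀ hD₀ hsub hw, ?_⟩⟩
  rwa [hGD]

theorem mem_domA_iff_boundary_general
    (hG₀dense : Dense (G₀.domain : Set E)) (hD₀dense : Dense (D₀.domain : Set H))
    (hsub : G₀ ≤ Gop D₀)
    (hLsubG : ∀ x : M, j x ∈ (Gop D₀).domain ∧ L x = Gap D₀ (j x))
    (hG₀subL : ∀ u ∈ G₀.domain, ∃ x : M, j x = u)
    (hK0 : ∀ x : M, j x ∈ G₀.domain → K x = 0)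
    {PG : E → E} {PD : H → H}
    (hPG : ∀ u ∈ (Gop D₀).domain, PG u ∈ BDG G₀ D₀ ∧ u - PG u ∈ G₀.domain)
    (hPD : ∀ w ∈ (Dop G₀).domain, PD w ∈ BDD G₀ D₀ ∧ w - PD w ∈ D₀.domain) (u : E) (w : H) :
    (u, w) ∈ domA j L K ↔ u ∈ (Gop D₀).domain ∧ w ∈ (Dop G₀).domain ∧
      (PG u, Dap G₀ (PD w)) ∈ boundaryRel G₀ D₀ j L K := by
  have hker : G₀.domain ≤ (LinearMap.ker K).map j := fun v hv => by
    obtain ⟨x, rfl⟩ := hG₀subL v hv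
    exact ⟨x, hK0 x hv, rfl⟩
  have hle : G₀.domain.prod D₀.domain ≤ domA j L K := prod_domain_le_domA hker fun y x => by
    rw [(hLsubG x).2, inner_gap_right hD₀dense (hLsubG x).1]
  have hu_of_mem : (u, w) ∈ domA j L K → u ∈ (Gop D₀).domain := by
    rintro ⟨x, rfl, -⟩
    exact (hLsubG x).1
  have hw_of_mem : (u, w) ∈ domA j L K → w ∈ (Dop G₀).domain :=
    snd_mem_adjoint_domain_of_mem_domA hker fun x hx => by
      rw [(hLsubG x).2, gap_coe hsub ⟨j x, hx⟩]
  have hboundary (hu : u ∈ (Gop D₀).domain) (hw : w ∈ (Dop G₀).domain) :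
      (u, w) ∈ domA j L K ↔ (PG u, Dap G₀ (PD w)) ∈ boundaryRel G₀ D₀ j L K := by
    obtain ⟨hPu, hu₀⟩ := hPG u hu
    obtain ⟨hPw, hw₀⟩ := hPD w hw
    rw [dap_eq_gap hG₀dense, mk_gap_mem_boundaryRel_iff hG₀dense hD₀dense hsub hPu
      (bdd_eq_bdg hG₀dense ▸ hPw)]
    have hdiff : (u, w) - (PG u, PD w) ∈ domA j L K := hle ⟨hu₀, hw₀⟩
    rw [← add_mem_cancel_left hdiff (y := (PG u, PD w)), sub_add_cancel]
  exact ⟨fun h => ⟨hu_of_mem h, hw_of_mem h, (hboundary (hu_of_mem h) (hw_of_mem h)).mp h⟩,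
    fun ⟨hu, hw, h⟩ => (hboundary hu hw).mpr h⟩

end BoundaryRelation

/-- [Trostorff 2015, Lemma 3.3]: `(u,w) ∈ D(A)`, i.e. `(u,w) ∈ E₀ × H` with
`K^⋄Ku − L^⋄w ∈ E`, if and only if `(u,w) ∈ D(G) × D(D)` and
`(π_{BD(G)}u, Ḋπ_{BD(D)}w) ∈ h`. -/
theorem mem_domA_iff_boundary (G₀ : E →ₗ.[ℂ] H) (D₀ : H →ₗ.[ℂ] E)
    (hG₀dense : Dense (G₀.domain : Set E)) (hD₀dense : Dense (D₀.domain : Set H))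
    (hG₀closed : G₀.IsClosed) (hD₀closed : D₀.IsClosed)
    (hsub : G₀ ≤ Gop D₀)
    (j : E₀ →L[ℂ] E) (L : E₀ →L[ℂ] H) (K : E₀ →L[ℂ] U)
    (hj_inj : Function.Injective j) (hj_dense : DenseRange j)
    (hclosed : ClosedLK j L K)
    (hLsubG : ∀ x : E₀, j x ∈ (Gop D₀).domain ∧ L x = Gap D₀ (j x))
    (hG₀subL : ∀ u ∈ G₀.domain, ∃ x : E₀, j x = u)
    (hK0 : ∀ x : E₀, j x ∈ G₀.domain → K x = 0)
    -- the orthogonal projections onto the boundary data spaces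
    (PG : E → E) (PD : H → H)
    (hPG : ∀ u ∈ (Gop D₀).domain, PG u ∈ BDG G₀ D₀ ∧ u - PG u ∈ G₀.domain)
    (hPD : ∀ w ∈ (Dop G₀).domain, PD w ∈ BDD G₀ D₀ ∧ w - PD w ∈ D₀.domain) :
    ∀ (u : E) (w : H),
      (∃ u₀ : E₀, j u₀ = u ∧
          ∃ e : E, ∀ x : E₀, (⟪e, j x⟫ : ℂ) = ⟪K u₀, K x⟫ - ⟪w, L x⟫) ↔
        (u ∈ (Gop D₀).domain ∧ w ∈ (Dop G₀).domain ∧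
          (PG u, Dap G₀ (PD w)) ∈ hRel G₀ D₀ j L K) :=
  mem_domA_iff_boundary_general (j := j.toLinearMap) (L := L.toLinearMap) (K := K.toLinearMap)
    hG₀dense hD₀dense hsub hLsubG hG₀subL hK0 hPG hPD
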